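/- Marginalisation of the latent-layer outputs of the other datapoints: in the N-point layered setup below, fix an index n ∈ {1, …, N} and suppose that for every layer l the n-th T_l-row-block of A^l(f_N^{l−1}) equals a^l(f_n^{l−1}) and the (n, n) diagonal T_l × T_l block of B^l(f_N^{l−1}) equals b^l(f_n^{l−1}), for measurable a^l : ℝ^{T_{l−1}} → ℝ^{T_l × m_l} and symmetric-positive-definite-valued b^l : ℝ^{T_{l−1}} → ℝ^{T_l × T_l}. Then for all f_n^L ∈ ℝ^{T_L}: ∫ N(f_M; μ_M, S_M) ∏_{l=1}^{L} N(f_N^l; A^l(f_N^{l−1}) f_M^l, B^l(f_N^{l−1})) df_M ∏_{n'≠n} df_{n'}^L ∏_{l=1}^{L−1} df_N^l = ∫ [ ∫ N(f_M; μ_M, S_M) ∏_{l=1}^{L} N(f_n^l; a^l(f_n^{l−1}) f_M^l, b^l(f_n^{l−1})) df_M ] df_n^1 ⋯ df_n^{L−1}; i.e. the marginal density of f_n^L depends only on the datapoint-n rows of the conditionals and all other datapoints' latent outputs integrate out. -/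

import Mathlib

open Matrix MeasureTheory Real

noncomputable section

/-- The multivariate Gaussian density
`N(x; μ, S) = (2π)^{−d/2} (det S)^{−1/2} exp(−(1/2)(x−μ)ᵀ S⁻¹ (x−μ))`. -/
def gaussPDF {ι : Type*} [Fintype ι] [DecidableEq ι]
    (μ : ι → ℝ) (S : Matrix ι ι ℝ) (x : ι → ℝ) : ℝ :=
  (2 * Real.pi) ^ (-(Fintype.card ι : ℝ) / 2) * S.det ^ (-(1 : ℝ) / 2) *
    Real.exp (-(1 / 2 : ℝ) * ((x - μ) ⬝ᵥ (S⁻¹ *ᵥ (x - μ))))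

/-- Coordinates of the full `N`-point trajectory `(f_N^0, f_N^1, …, f_N^L)`; the number
of layers is `K + 1 ≥ 1` and layer outputs are indexed by `l : Fin (K + 2)`. -/
abbrev TrajIx (K N : ℕ) (T : Fin (K + 2) → ℕ) : Type :=
  (l : Fin (K + 2)) × (Fin N × Fin (T l))

/-- The trajectory coordinates that are integrated out on the left-hand side: everything
except the fixed input layer `0` and the final-layer output of data point `n`. -/
abbrev FreeIx (K N : ℕ) (T : Fin (K + 2) → ℕ) (n : Fin N) : Type :=
  {p : TrajIx K N T // p.1 ≠ 0 ∧ ¬(p.1 = Fin.last (K + 1) ∧ p.2.1 = n)}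

/-- Assemble the full `N`-point trajectory from the fixed input `f0`, the fixed
final-layer output `y` of data point `n`, and the free coordinates `z`. -/
def assembleN {K N : ℕ} {T : Fin (K + 2) → ℕ} (n : Fin N)
    (f0 : Fin N × Fin (T 0) → ℝ) (y : Fin (T (Fin.last (K + 1))) → ℝ)
    (z : FreeIx K N T n → ℝ) : TrajIx K N T → ℝ :=
  fun p =>
    if h0 : p.1 = 0 then f0 (p.2.1, Fin.cast (show T p.1 = T 0 by rw [h0]) p.2.2)
    else if hl : p.1 = Fin.last (K + 1) ∧ p.2.1 = n then
      y (Fin.cast (show T p.1 = T (Fin.last (K + 1)) by rw [hl.1]) p.2.2)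
    else z ⟨p, h0, hl⟩

/-- Coordinates of the single-point trajectory `(f_n^0, f_n^1, …, f_n^L)`. -/
abbrev PtIx (K : ℕ) (T : Fin (K + 2) → ℕ) : Type := (l : Fin (K + 2)) × Fin (T l)

/-- The single-point trajectory coordinates that are integrated out on the right-hand
side: the latent layers `1, …, L − 1`. -/
abbrev PtFreeIx (K : ℕ) (T : Fin (K + 2) → ℕ) : Type :=
  {p : PtIx K T // p.1 ≠ 0 ∧ p.1 ≠ Fin.last (K + 1)}

/-- Assemble the single-point trajectory of data point `n` from its fixed input `x0`,
its fixed final-layer output `y`, and the free latent coordinates `u`. -/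
def assemble1 {K : ℕ} {T : Fin (K + 2) → ℕ} (x0 : Fin (T 0) → ℝ)
    (y : Fin (T (Fin.last (K + 1))) → ℝ) (u : PtFreeIx K T → ℝ) : PtIx K T → ℝ :=
  fun p =>
    if h0 : p.1 = 0 then x0 (Fin.cast (show T p.1 = T 0 by rw [h0]) p.2)
    else if hl : p.1 = Fin.last (K + 1) then
      y (Fin.cast (show T p.1 = T (Fin.last (K + 1)) by rw [hl]) p.2)
    else u ⟨p, h0, hl⟩

/-!
Given `f_M`, layer `l` of the joint density depends only on the layers up to `l`, so the outputs of
the other datapoints can be integrated out layer by layer, starting from the last one. Integrating a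
block of coordinates out of a Gaussian leaves the Gaussian of the complementary block, whose
parameters for datapoint `n` are exactly `a^l f_M^l` and `b^l`, evaluated at `f_n^{l-1}` only. The
Gaussian marginal itself follows from a shear that block-diagonalises the covariance: the density
factors into the marginal density times a conditional density of total mass `1` whose covariance is
the Schur complement. All functions are nonnegative, so Tonelli's theorem justifies every exchange
of integrals.
-/

open scoped ENNReal

section GaussianDensity

variable {ι κ ρ : Type*} [Fintype ι] [DecidableEq ι] [Fintype κ] [Fintype ρ] [DecidableEq ρ]

lemma gaussPDF_nonneg (μ : ι → ℝ) {S : Matrix ι ι ℝ} (hS : S.PosDef) (x : ι → ℝ) :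
    0 ≤ gaussPDF μ S x := by
  have := hS.det_pos
  unfold gaussPDF
  positivity

lemma gaussPDF_le (μ : ι → ℝ) {S : Matrix ι ι ℝ} (hS : S.PosDef) (x : ι → ℝ) :
    gaussPDF μ S x ≤ (2 * π) ^ (-(Fintype.card ι : ℝ) / 2) * S.det ^ (-(1 : ℝ) / 2) := by
  have hdet := hS.det_pos
  have hquad : 0 ≤ (x - μ) ⬝ᵥ (S⁻¹ *ᵥ (x - μ)) := by
    simpa only [star_trivial] using hS.inv.posSemidef.dotProduct_mulVec_nonneg (x - μ)
  refine mul_le_of_le_one_right (by positivity) ?_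
  rw [Real.exp_le_one_iff]
  linarith

lemma gaussPDF_eq_gaussPDF_zero_sub (μ : ι → ℝ) (S : Matrix ι ι ℝ) (x : ι → ℝ) :
    gaussPDF μ S x = gaussPDF 0 S (x - μ) := by
  simp only [gaussPDF, sub_zero]

lemma gaussPDF_comp_equiv (e : ι ≃ ρ) (μ : ρ → ℝ) (S : Matrix ρ ρ ℝ) (x : ρ → ℝ) :
    gaussPDF (μ ∘ e) (S.submatrix e e) (x ∘ e) = gaussPDF μ S x := by
  have hsub : x ∘ e - μ ∘ e = (x - μ) ∘ e := rfl
  rw [gaussPDF, gaussPDF, Fintype.card_congr e, det_submatrix_equiv_self, inv_submatrix_equiv,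
    hsub, submatrix_mulVec_equiv, Function.comp_assoc, Equiv.self_comp_symm, Function.comp_id,
    comp_equiv_dotProduct_comp_equiv]

lemma gaussPDF_mulVec {R S : Matrix ι ι ℝ} (hR : IsUnit R.det) (hS : 0 ≤ S.det)
    (μ x : ι → ℝ) :
    gaussPDF (R *ᵥ μ) (R * S * Rᵀ) (R *ᵥ x) = |R.det|⁻¹ * gaussPDF μ S x := by
  have hdet : (R * S * Rᵀ).det ^ (-(1 : ℝ) / 2) = |R.det|⁻¹ * S.det ^ (-(1 : ℝ) / 2) := by
    have hsq : (R * S * Rᵀ).det = |R.det| ^ (2 : ℝ) * S.det := by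
      rw [det_mul, det_mul, det_transpose, Real.rpow_two, sq_abs]
      ring
    rw [hsq, Real.mul_rpow (by positivity) hS, ← Real.rpow_mul (abs_nonneg _)]
    norm_num [Real.rpow_neg_one]
  have hquad (z : ι → ℝ) : (R *ᵥ z) ⬝ᵥ ((R * S * Rᵀ)⁻¹ *ᵥ (R *ᵥ z)) = z ⬝ᵥ (S⁻¹ *ᵥ z) := by
    have hRR : R⁻¹ *ᵥ (R *ᵥ z) = z := by
      rw [mulVec_mulVec, nonsing_inv_mul _ hR, one_mulVec]
    rw [Matrix.mul_inv_rev, Matrix.mul_inv_rev, ← transpose_nonsing_inv, ← mulVec_mulVec,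
      ← mulVec_mulVec, hRR, dotProduct_mulVec, vecMul_transpose, hRR]
  rw [gaussPDF, gaussPDF, hdet, ← mulVec_sub, hquad]
  ring

lemma gaussPDF_fromBlocks_zero [DecidableEq κ] {A : Matrix ι ι ℝ} {D : Matrix κ κ ℝ}
    (hA : A.PosDef) (hD : D.PosDef) (μ x : ι → ℝ) (ν y : κ → ℝ) :
    gaussPDF (Sum.elim μ ν) (fromBlocks A 0 0 D) (Sum.elim x y) =
      gaussPDF μ A x * gaussPDF ν D y := by
  have hinv : (fromBlocks A 0 0 D)⁻¹ = fromBlocks A⁻¹ 0 0 D⁻¹ := by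
    rw [inv_fromBlocks_zero₂₁_of_isUnit_iff A 0 D (iff_of_true hA.isUnit hD.isUnit)]
    simp
  have hsub : Sum.elim x y - Sum.elim μ ν = Sum.elim (x - μ) (y - ν) := by
    ext (i | i) <;> rfl
  have hcard : (2 * π) ^ (-(Fintype.card (ι ⊕ κ) : ℝ) / 2) =
      (2 * π) ^ (-(Fintype.card ι : ℝ) / 2) * (2 * π) ^ (-(Fintype.card κ : ℝ) / 2) := by
    rw [← Real.rpow_add (by positivity), Fintype.card_sum]
    push_cast
    ring_nf
  rw [gaussPDF, gaussPDF, gaussPDF, hcard, hinv, hsub, det_fromBlocks_zero₂₁,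
    Real.mul_rpow hA.det_pos.le hD.det_pos.le, fromBlocks_mulVec, sumElim_dotProduct_sumElim]
  simp only [Sum.elim_comp_inl, Sum.elim_comp_inr, zero_mulVec, add_zero, zero_add, mul_add,
    Real.exp_add]
  ring

lemma shear_mul_fromBlocks_mul_transpose [DecidableEq κ] {A : Matrix ι ι ℝ} (hA : A.PosDef)
    (B : Matrix ι κ ℝ) (D : Matrix κ κ ℝ) :
    fromBlocks 1 0 (-(Bᵀ * A⁻¹)) 1 * fromBlocks A B Bᵀ D *
        (fromBlocks 1 0 (-(Bᵀ * A⁻¹)) 1)ᵀ =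
      fromBlocks A 0 0 (D - Bᵀ * A⁻¹ * B) := by
  have hAt : Aᵀ = A := hA.isHermitian.eq
  have hdet : IsUnit A.det := hA.det_pos.ne'.isUnit
  simp only [fromBlocks_transpose, fromBlocks_multiply, transpose_neg, transpose_mul,
    transpose_nonsing_inv, transpose_transpose, hAt, transpose_one, transpose_zero,
    Matrix.one_mul, Matrix.mul_one, Matrix.zero_mul, Matrix.mul_zero, Matrix.neg_mul,
    Matrix.mul_neg, Matrix.mul_assoc, nonsing_inv_mul _ hdet, mul_nonsing_inv_cancel_left _ _ hdet,
    add_zero, neg_add_cancel]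
  congr 1
  abel

lemma posDef_schurComplement {σ : Type*} [Finite σ] {A : Matrix ι ι ℝ} {B : Matrix ι σ ℝ}
    {D : Matrix σ σ ℝ} (hS : (fromBlocks A B Bᵀ D).PosDef) : (D - Bᵀ * A⁻¹ * B).PosDef := by
  classical
  have := Fintype.ofFinite σ
  have hA : A.PosDef := hS.submatrix Sum.inl_injective
  have hR : IsUnit (fromBlocks 1 0 (-(Bᵀ * A⁻¹)) 1 : Matrix (ι ⊕ σ) (ι ⊕ σ) ℝ) := by
    rw [isUnit_iff_isUnit_det, det_fromBlocks_zero₁₂, det_one, det_one, one_mul]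
    exact isUnit_one
  have hdiag := hS.mul_mul_conjTranspose_same (vecMul_injective_iff_isUnit.2 hR)
  rw [conjTranspose_eq_transpose_of_trivial, shear_mul_fromBlocks_mul_transpose hA] at hdiag
  exact hdiag.submatrix Sum.inr_injective

lemma gaussPDF_fromBlocks [DecidableEq κ] {A : Matrix ι ι ℝ} {B : Matrix ι κ ℝ}
    {D : Matrix κ κ ℝ} (hS : (fromBlocks A B Bᵀ D).PosDef)
    (μ x : ι → ℝ) (ν y : κ → ℝ) :
    gaussPDF (Sum.elim μ ν) (fromBlocks A B Bᵀ D) (Sum.elim x y) =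
      gaussPDF μ A x *
        gaussPDF (ν + (Bᵀ * A⁻¹) *ᵥ (x - μ)) (D - Bᵀ * A⁻¹ * B) y := by
  have hA : A.PosDef := hS.submatrix Sum.inl_injective
  set R : Matrix (ι ⊕ κ) (ι ⊕ κ) ℝ := fromBlocks 1 0 (-(Bᵀ * A⁻¹)) 1 with hRdef
  have hRdet : R.det = 1 := by
    rw [hRdef, det_fromBlocks_zero₁₂, det_one, det_one, one_mul]
  have hR (u : ι → ℝ) (v : κ → ℝ) :
      R *ᵥ Sum.elim u v = Sum.elim u (v - (Bᵀ * A⁻¹) *ᵥ u) := by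
    rw [hRdef, fromBlocks_mulVec]
    simp only [Sum.elim_comp_inl, Sum.elim_comp_inr, one_mulVec, zero_mulVec, add_zero,
      neg_mulVec, neg_add_eq_sub]
  calc
    _ = gaussPDF (R *ᵥ Sum.elim μ ν) (R * fromBlocks A B Bᵀ D * Rᵀ) (R *ᵥ Sum.elim x y) := by
      rw [gaussPDF_mulVec (by simp [hRdet]) hS.det_pos.le, hRdet, abs_one, inv_one, one_mul]
    _ = gaussPDF μ A x * gaussPDF (ν - (Bᵀ * A⁻¹) *ᵥ μ) (D - Bᵀ * A⁻¹ * B)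
          (y - (Bᵀ * A⁻¹) *ᵥ x) := by
      rw [hR, hR, shear_mul_fromBlocks_mul_transpose hA,
        gaussPDF_fromBlocks_zero hA (posDef_schurComplement hS)]
    _ = _ := by
      rw [gaussPDF_eq_gaussPDF_zero_sub (ν - _), gaussPDF_eq_gaussPDF_zero_sub (ν + _), mulVec_sub]
      congr 2
      abel

open scoped MatrixOrder Matrix.Norms.L2Operator in
lemma exists_eq_mul_transpose_of_posDef {S : Matrix ι ι ℝ} (hS : S.PosDef) :
    ∃ R : Matrix ι ι ℝ, IsUnit R.det ∧ S = R * Rᵀ := by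
  obtain ⟨R, hR⟩ := CStarAlgebra.nonneg_iff_eq_mul_star_self.1 hS.posSemidef.nonneg
  rw [star_eq_conjTranspose, conjTranspose_eq_transpose_of_trivial] at hR
  refine ⟨R, isUnit_iff_ne_zero.2 fun h => hS.det_pos.ne' ?_, hR⟩
  rw [hR, det_mul, h, zero_mul]

lemma measurable_matrix_det {α : Type*} [MeasurableSpace α] {S : α → Matrix ι ι ℝ}
    (hS : ∀ i j, Measurable fun p => S p i j) : Measurable fun p => (S p).det := by
  simp only [det_apply]
  exact Finset.measurable_sum _ fun σ _ =>
    (Finset.measurable_prod _ fun i _ => hS _ _).const_smul _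

lemma measurable_matrix_inv_apply {α : Type*} [MeasurableSpace α] {S : α → Matrix ι ι ℝ}
    (hS : ∀ i j, Measurable fun p => S p i j) (i j : ι) :
    Measurable fun p => (S p)⁻¹ i j := by
  simp only [inv_def, Matrix.smul_apply, Ring.inverse_eq_inv', smul_eq_mul, adjugate_apply]
  refine (measurable_matrix_det hS).inv.mul (measurable_matrix_det fun k c => ?_)
  obtain rfl | hk := eq_or_ne k j
  · simp only [updateRow_self, measurable_const]
  · simpa only [updateRow_ne hk] using hS k c

lemma measurable_gaussPDF {α : Type*} [MeasurableSpace α] {μ x : α → ι → ℝ}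
    {S : α → Matrix ι ι ℝ} (hμ : Measurable μ) (hS : ∀ i j, Measurable fun p => S p i j)
    (hx : Measurable x) : Measurable fun p => gaussPDF (μ p) (S p) (x p) := by
  have hsub (i : ι) : Measurable fun p => (x p - μ p) i :=
    (measurable_pi_iff.1 hx i).sub (measurable_pi_iff.1 hμ i)
  have hquad : Measurable fun p => (x p - μ p) ⬝ᵥ ((S p)⁻¹ *ᵥ (x p - μ p)) :=
    Finset.measurable_sum _ fun i _ => (hsub i).mul <|
      Finset.measurable_sum _ fun j _ => (measurable_matrix_inv_apply hS i j).mul (hsub j)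
  exact (((measurable_matrix_det hS).pow_const _).const_mul _).mul (hquad.const_mul _).exp

lemma measurable_gaussPDF_right (μ : ι → ℝ) (S : Matrix ι ι ℝ) : Measurable (gaussPDF μ S) :=
  measurable_gaussPDF measurable_const (fun _ _ => measurable_const) measurable_id

lemma lintegral_comp_mulVec {R : Matrix ι ι ℝ} (hR : IsUnit R.det) {f : (ι → ℝ) → ℝ≥0∞}
    (hf : Measurable f) :
    ∫⁻ y, f (R *ᵥ y) = ENNReal.ofReal |R.det|⁻¹ * ∫⁻ y, f y := by
  have hmeas : Measurable (toLin' R) :=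
    (LinearMap.continuous_of_finiteDimensional _).measurable
  have hmap := lintegral_map (μ := volume) hf hmeas
  rw [Real.map_matrix_volume_pi_eq_smul_volume_pi hR.ne_zero, lintegral_smul_measure, abs_inv,
    smul_eq_mul] at hmap
  simpa only [toLin'_apply] using hmap.symm

lemma gaussPDF_zero_one (x : ι → ℝ) :
    gaussPDF 0 1 x = ∏ i, ProbabilityTheory.gaussianPDFReal 0 1 (x i) := by
  simp only [gaussPDF, ProbabilityTheory.gaussianPDFReal, Finset.prod_mul_distrib,
    Finset.prod_const, ← Real.exp_sum, dotProduct, sub_zero, inv_one, one_mulVec, det_one,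
    Real.one_rpow, mul_one, NNReal.coe_one, Finset.card_univ]
  congr 1
  · rw [Real.sqrt_eq_rpow, ← Real.rpow_neg (by positivity), ← Real.rpow_natCast,
      ← Real.rpow_mul (by positivity)]
    ring_nf
  · rw [Finset.mul_sum]
    ring_nf

lemma lintegral_gaussPDF_zero_one :
    ∫⁻ x : ι → ℝ, ENNReal.ofReal (gaussPDF 0 1 x) = 1 := by
  have hint : Integrable fun x : ι → ℝ => gaussPDF 0 1 x := by
    simp only [gaussPDF_zero_one]
    exact Integrable.fintype_prod fun _ => ProbabilityTheory.integrable_gaussianPDFReal 0 1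
  rw [← ofReal_integral_eq_lintegral_ofReal hint (.of_forall (gaussPDF_nonneg 0 PosDef.one))]
  simp only [gaussPDF_zero_one]
  rw [integral_fintype_prod_volume_eq_prod]
  simp only [ProbabilityTheory.integral_gaussianPDFReal_eq_one 0 one_ne_zero,
    Finset.prod_const_one, ENNReal.ofReal_one]

lemma lintegral_gaussPDF (μ : ι → ℝ) {S : Matrix ι ι ℝ} (hS : S.PosDef) :
    ∫⁻ x, ENNReal.ofReal (gaussPDF μ S x) = 1 := by
  obtain ⟨R, hR, rfl⟩ := exists_eq_mul_transpose_of_posDef hS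
  have hmeas := (measurable_gaussPDF_right 0 (R * Rᵀ)).ennreal_ofReal
  have hstd (z : ι → ℝ) : gaussPDF 0 (R * Rᵀ) (R *ᵥ z) = |R.det|⁻¹ * gaussPDF 0 1 z := by
    simpa only [mulVec_zero, Matrix.mul_one] using
      gaussPDF_mulVec hR (S := 1) (by simp) 0 z
  have hscale : ENNReal.ofReal |R.det|⁻¹ ≠ 0 := by simpa using hR.ne_zero
  have hcentre : ∫⁻ x, ENNReal.ofReal (gaussPDF 0 (R * Rᵀ) x) = 1 := by
    have hsubst := lintegral_comp_mulVec hR hmeas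
    simp only [hstd, ENNReal.ofReal_mul (inv_nonneg.2 (abs_nonneg R.det))] at hsubst
    rw [lintegral_const_mul' _ _ ENNReal.ofReal_ne_top, lintegral_gaussPDF_zero_one] at hsubst
    exact ((ENNReal.mul_right_inj hscale ENNReal.ofReal_ne_top).1 hsubst).symm
  simp only [gaussPDF_eq_gaussPDF_zero_sub μ]
  rw [lintegral_sub_right_eq_self fun x => ENNReal.ofReal (gaussPDF 0 (R * Rᵀ) x), hcentre]

lemma integrable_gaussPDF (μ : ι → ℝ) {S : Matrix ι ι ℝ} (hS : S.PosDef) :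
    Integrable (gaussPDF μ S) := by
  refine ⟨(measurable_gaussPDF_right μ S).aestronglyMeasurable, ?_⟩
  rw [hasFiniteIntegral_iff_ofReal (.of_forall (gaussPDF_nonneg μ hS)), lintegral_gaussPDF μ hS]
  exact ENNReal.one_lt_top

lemma lintegral_gaussPDF_marginal (e : ι ⊕ κ ≃ ρ) (μ : ρ → ℝ) {S : Matrix ρ ρ ℝ}
    (hS : S.PosDef) (x : ι → ℝ) :
    ∫⁻ v : κ → ℝ, ENNReal.ofReal (gaussPDF μ S (Sum.elim x v ∘ e.symm)) =
      ENNReal.ofReal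
        (gaussPDF (μ ∘ e ∘ Sum.inl) (S.submatrix (e ∘ Sum.inl) (e ∘ Sum.inl)) x) := by
  classical
  have hpd := hS.submatrix e.injective
  have hsymm : (S.submatrix e e).toBlocks₂₁ = (S.submatrix e e).toBlocks₁₂ᵀ := by
    ext i j
    exact congr_fun₂ hS.isHermitian.eq.symm _ _
  rw [← fromBlocks_toBlocks (S.submatrix e e), hsymm] at hpd
  have hfactor (v : κ → ℝ) := calc
    gaussPDF μ S (Sum.elim x v ∘ e.symm)
      = gaussPDF (μ ∘ e) (S.submatrix e e) (Sum.elim x v) := by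
        rw [← gaussPDF_comp_equiv e, Function.comp_assoc, e.symm_comp_self, Function.comp_id]
    _ = gaussPDF (Sum.elim (μ ∘ e ∘ Sum.inl) (μ ∘ e ∘ Sum.inr)) _ (Sum.elim x v) := by
        rw [← fromBlocks_toBlocks (S.submatrix e e), hsymm, ← Sum.elim_comp_inl_inr (μ ∘ e)]
        rfl
    _ = _ := gaussPDF_fromBlocks hpd _ _ _ _
  have hA : (S.submatrix e e).toBlocks₁₁.PosDef := hpd.submatrix Sum.inl_injective
  simp only [hfactor, ENNReal.ofReal_mul (gaussPDF_nonneg _ hA _)]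
  rw [lintegral_const_mul' _ _ ENNReal.ofReal_ne_top,
    lintegral_gaussPDF _ (posDef_schurComplement hpd), mul_one]
  rfl

end GaussianDensity

section IteratedIntegrals

/-- A function depending only on coordinates `≤ i` is constant in each later coordinate, so the
factors can be integrated out from the last one backwards. -/
lemma lmarginal_prod_eq_of_dependsOn {ι : Type*} [LinearOrder ι] {X : ι → Type*}
    [∀ i, MeasurableSpace (X i)] (μ : ∀ i, Measure (X i)) [∀ i, SigmaFinite (μ i)]
    {h : ι → (∀ i, X i) → ℝ≥0∞} {c : ι → ℝ≥0∞} (hmeas : ∀ i, Measurable (h i))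
    (hdep : ∀ i, DependsOn (h i) (Set.Iic i))
    (hint : ∀ i x, ∫⁻ t, h i (Function.update x i t) ∂μ i = c i) (s : Finset ι)
    (x : ∀ i, X i) :
    (∫⋯∫⁻_s, fun x => ∏ i ∈ s, h i x ∂μ) x = ∏ i ∈ s, c i := by
  induction s using Finset.induction_on_max with
  | empty => simp only [Finset.prod_empty, lmarginal_empty]
  | insert a s ha ih =>
    have has : a ∉ s := fun h => lt_irrefl a (ha a h)
    have hprod (s : Finset ι) : Measurable fun x => ∏ i ∈ s, h i x :=
      Finset.measurable_prod _ fun i _ => hmeas i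
    have hlast (x : ∀ i, X i) :
        ∫⁻ t, ∏ i ∈ insert a s, h i (Function.update x a t) ∂μ a = c a * ∏ i ∈ s, h i x := by
      have hearlier (t : X a) : ∏ i ∈ s, h i (Function.update x a t) = ∏ i ∈ s, h i x :=
        Finset.prod_congr rfl fun i hi => hdep i fun j hj =>
          Function.update_of_ne (lt_of_le_of_lt hj (ha i hi)).ne _ _
      have hupdate : Measurable fun t => h a (Function.update x a t) :=
        (hmeas a).comp (measurable_update x)
      simp only [Finset.prod_insert has, hearlier]
      rw [lintegral_mul_const _ hupdate, hint]
    rw [lmarginal_insert' _ (hprod _) has]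
    simp only [hlast]
    rw [Finset.prod_insert has, ← ih]
    exact lintegral_const_mul _ ((hprod s).comp measurable_updateFinset)

lemma lintegral_pi_prod_eq_of_dependsOn {ι : Type*} [Fintype ι] [LinearOrder ι] {X : ι → Type*}
    [∀ i, MeasurableSpace (X i)] (μ : ∀ i, Measure (X i)) [∀ i, SigmaFinite (μ i)]
    {h : ι → (∀ i, X i) → ℝ≥0∞} {c : ι → ℝ≥0∞} (hmeas : ∀ i, Measurable (h i))
    (hdep : ∀ i, DependsOn (h i) (Set.Iic i))
    (hint : ∀ i x, ∫⁻ t, h i (Function.update x i t) ∂μ i = c i) [∀ i, Nonempty (X i)] :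
    ∫⁻ x, ∏ i, h i x ∂Measure.pi μ = ∏ i, c i := by
  obtain ⟨x⟩ : Nonempty (∀ i, X i) := inferInstance
  rw [lintegral_eq_lmarginal_univ x]
  exact lmarginal_prod_eq_of_dependsOn μ hmeas hdep hint Finset.univ x

lemma measurePreserving_piCurry_symm {ι : Type*} [Fintype ι] {κ : ι → Type*}
    [∀ i, Fintype (κ i)] {X : (i : ι) → κ i → Type*} [∀ i j, MeasurableSpace (X i j)]
    (μ : ∀ i j, Measure (X i j)) [∀ i j, SigmaFinite (μ i j)] :
    MeasurePreserving (MeasurableEquiv.piCurry X).symm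
      (Measure.pi fun i => Measure.pi (μ i))
      (Measure.pi fun p : (i : ι) × κ i => μ p.1 p.2) := by
  refine ⟨(MeasurableEquiv.piCurry X).symm.measurable, (Measure.pi_eq fun s _ => ?_).symm⟩
  have hrect : (MeasurableEquiv.piCurry X).symm ⁻¹' Set.univ.pi s =
      Set.univ.pi fun i => Set.univ.pi fun j => s ⟨i, j⟩ := by
    ext v
    simp only [Set.mem_preimage, Set.mem_univ_pi, Sigma.forall]
    rfl
  rw [MeasurableEquiv.map_apply, hrect, Measure.pi_pi]
  simp only [Measure.pi_pi, Fintype.prod_sigma]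

lemma integrable_and_integral_eq_of_lintegral_ofReal_eq {α : Type*} [MeasurableSpace α]
    {μ : Measure α} {f : α → ℝ} {c : ℝ} (hf : AEStronglyMeasurable f μ) (hf0 : 0 ≤ᵐ[μ] f)
    (hc : 0 ≤ c) (h : ∫⁻ x, ENNReal.ofReal (f x) ∂μ = ENNReal.ofReal c) :
    Integrable f μ ∧ ∫ x, f x ∂μ = c := by
  refine ⟨⟨hf, ?_⟩, ?_⟩
  · rw [hasFiniteIntegral_iff_ofReal hf0, h]
    exact ENNReal.ofReal_lt_top
  · rw [integral_eq_lintegral_of_nonneg_ae hf0 hf, h, ENNReal.toReal_ofReal hc]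

lemma integrable_prod_and_integral_eq {α β : Type*} [MeasurableSpace α] [MeasurableSpace β]
    {μ : Measure α} {ν : Measure β} [SFinite ν] {f : α × β → ℝ} {g : α → ℝ}
    (hf : AEStronglyMeasurable f (μ.prod ν)) (hf0 : ∀ p, 0 ≤ f p) (hg : Integrable g μ)
    (hg0 : ∀ x, 0 ≤ g x) (hfg : ∀ x, ∫⁻ y, ENNReal.ofReal (f (x, y)) ∂ν = ENNReal.ofReal (g x)) :
    Integrable f (μ.prod ν) ∧ ∫ p, f p ∂μ.prod ν = ∫ x, g x ∂μ := by
  refine integrable_and_integral_eq_of_lintegral_ofReal_eq hf (.of_forall hf0)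
    (integral_nonneg hg0) ?_
  rw [lintegral_prod _ hf.aemeasurable.ennreal_ofReal,
    ofReal_integral_eq_lintegral_ofReal hg (.of_forall hg0)]
  simp only [hfg]

/- When `f` is not integrable both sides are `0`, since the iterated integral of a nonnegative
function diverges as well. -/
lemma integral_prod_of_nonneg {α β : Type*} [MeasurableSpace α] [MeasurableSpace β]
    {μ : Measure α} {ν : Measure β} [SFinite μ] [SFinite ν] {f : α × β → ℝ}
    (hf : AEStronglyMeasurable f (μ.prod ν)) (hf0 : ∀ p, 0 ≤ f p)
    (hint : ∀ᵐ x ∂μ, Integrable (fun y => f (x, y)) ν) :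
    ∫ p, f p ∂μ.prod ν = ∫ x, ∫ y, f (x, y) ∂ν ∂μ := by
  by_cases hprod : Integrable f (μ.prod ν)
  · exact integral_prod f hprod
  · have hiter : ¬ Integrable (fun x => ∫ y, f (x, y) ∂ν) μ := fun h =>
      hprod <| (integrable_prod_iff hf).2
        ⟨hint, by simpa only [Real.norm_of_nonneg (hf0 _)] using h⟩
    rw [integral_undef hprod, integral_undef hiter]

/-- The measurable equivalence gluing a vector on `α` and a vector on `β` to one on
`δ ≃ α ⊕ β`; it splits an integral over many coordinates into blocks. -/
def glueEquiv {α β δ : Type*} (e : α ⊕ β ≃ δ) : ((α → ℝ) × (β → ℝ)) ≃ᵐ (δ → ℝ) :=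
  (MeasurableEquiv.sumPiEquivProdPi fun _ : α ⊕ β => ℝ).symm.trans
    (MeasurableEquiv.piCongrLeft (fun _ => ℝ) e)

lemma glueEquiv_apply {α β δ : Type*} (e : α ⊕ β ≃ δ) (p : (α → ℝ) × (β → ℝ)) :
    glueEquiv e p = Sum.elim p.1 p.2 ∘ e.symm := by
  rw [Equiv.eq_comp_symm]
  ext (i | i) <;> exact Equiv.piCongrLeft_apply_apply (fun _ => ℝ) e _ _

lemma measurePreserving_glueEquiv {α β δ : Type*} [Fintype α] [Fintype β] [Fintype δ]
    (e : α ⊕ β ≃ δ) : MeasurePreserving (glueEquiv e) :=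
  (volume_measurePreserving_piCongrLeft (fun _ => ℝ) e).comp
    (volume_measurePreserving_sumPiEquivProdPi_symm fun _ : α ⊕ β => ℝ)

lemma integral_sum_eq_integral_blocks {α δ M ι : Type*} {κ : ι → Type*} [Fintype α] [Fintype δ]
    [Fintype M] [Fintype ι] [∀ i, Fintype (κ i)] (e : α ⊕ ((i : ι) × κ i) ≃ δ)
    (F : (δ → ℝ) → (M → ℝ) → ℝ) :
    ∫ w : δ ⊕ M → ℝ, F (w ∘ Sum.inl) (w ∘ Sum.inr) =
      ∫ p : (α → ℝ) × (M → ℝ) × (∀ i, κ i → ℝ),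
        F (Sum.elim p.1 (fun q => p.2.2 q.1 q.2) ∘ e.symm) p.2.1 := by
  let uncurry := (MeasurableEquiv.piCurry fun (i : ι) (_ : κ i) => ℝ).symm
  let reorder : α ⊕ (M ⊕ ((i : ι) × κ i)) ≃ δ ⊕ M :=
    ((Equiv.refl α).sumCongr (Equiv.sumComm _ _)).trans
      ((Equiv.sumAssoc _ _ _).symm.trans (e.sumCongr (Equiv.refl M)))
  let Φ := ((MeasurableEquiv.refl (α → ℝ)).prodCongr
    (((MeasurableEquiv.refl (M → ℝ)).prodCongr uncurry).trans (glueEquiv (Equiv.refl _)))).trans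
      (glueEquiv reorder)
  have hcurry : MeasurePreserving uncurry := measurePreserving_piCurry_symm fun _ _ => volume
  have hΦ : MeasurePreserving Φ :=
    (measurePreserving_glueEquiv reorder).comp <| (MeasurePreserving.id _).prod <|
      (measurePreserving_glueEquiv (Equiv.refl _)).comp <| (MeasurePreserving.id _).prod hcurry
  rw [← hΦ.integral_comp']
  refine integral_congr_ae (.of_forall fun p => ?_)
  have hΦp : Φ p = Sum.elim (Sum.elim p.1 (uncurry p.2.2) ∘ e.symm) p.2.1 := by
    change glueEquiv reorder (p.1, glueEquiv (Equiv.refl _) (p.2.1, uncurry p.2.2)) = _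
    rw [glueEquiv_apply, glueEquiv_apply, Equiv.comp_symm_eq]
    ext (i | i | i)
    · exact congrArg (Sum.elim p.1 (uncurry p.2.2)) (e.symm_apply_apply (Sum.inl i)).symm
    · rfl
    · exact congrArg (Sum.elim p.1 (uncurry p.2.2)) (e.symm_apply_apply (Sum.inr i)).symm
  simp only [hΦp, Sum.elim_comp_inl, Sum.elim_comp_inr]
  rfl

end IteratedIntegrals

section LayeredModel

/-- The conditional density `N(f^{l+1}; A^l(f^l) f_M^l, B^l(f^l))` of one layer of a trajectory `x`
given the preceding one, as a factor of the joint density. Layer `l` of `x` has coordinates `I l`,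
so that `I l = Fin N × Fin (T l)` gives the `N`-point model and `I l = Fin (T l)` the single-point
model. -/
def layerDensity {K : ℕ} {I : Fin (K + 2) → Type*} [∀ l, Fintype (I l)]
    [∀ l, DecidableEq (I l)] {κ : Fin (K + 1) → Type*} [∀ l, Fintype (κ l)]
    (A : ∀ l : Fin (K + 1), (I l.castSucc → ℝ) → Matrix (I l.succ) (κ l) ℝ)
    (B : ∀ l : Fin (K + 1), (I l.castSucc → ℝ) → Matrix (I l.succ) (I l.succ) ℝ)
    (fM : ((l : Fin (K + 1)) × κ l) → ℝ) (x : ((l : Fin (K + 2)) × I l) → ℝ)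
    (l : Fin (K + 1)) : ℝ :=
  gaussPDF (A l (fun q => x ⟨l.castSucc, q⟩) *ᵥ fun c => fM ⟨l, c⟩)
    (B l fun q => x ⟨l.castSucc, q⟩) fun q => x ⟨l.succ, q⟩

section LayerDensity

variable {K : ℕ} {I : Fin (K + 2) → Type*} [∀ l, Fintype (I l)] [∀ l, DecidableEq (I l)]
  {κ : Fin (K + 1) → Type*} [∀ l, Fintype (κ l)]
  {A : ∀ l : Fin (K + 1), (I l.castSucc → ℝ) → Matrix (I l.succ) (κ l) ℝ}
  {B : ∀ l : Fin (K + 1), (I l.castSucc → ℝ) → Matrix (I l.succ) (I l.succ) ℝ}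

lemma layerDensity_nonneg (hB : ∀ l x, (B l x).PosDef) (fM : ((l : Fin (K + 1)) × κ l) → ℝ)
    (x : ((l : Fin (K + 2)) × I l) → ℝ) (l : Fin (K + 1)) : 0 ≤ layerDensity A B fM x l :=
  gaussPDF_nonneg _ (hB l _) _

lemma prod_layerDensity_nonneg (hB : ∀ l x, (B l x).PosDef) (fM : ((l : Fin (K + 1)) × κ l) → ℝ)
    (x : ((l : Fin (K + 2)) × I l) → ℝ) : 0 ≤ ∏ l, layerDensity A B fM x l :=
  Finset.prod_nonneg fun l _ => layerDensity_nonneg hB fM x l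

lemma ofReal_prod_layerDensity (hB : ∀ l x, (B l x).PosDef)
    (fM : ((l : Fin (K + 1)) × κ l) → ℝ) (x : ((l : Fin (K + 2)) × I l) → ℝ) :
    ENNReal.ofReal (∏ l, layerDensity A B fM x l) = ∏ l, ENNReal.ofReal (layerDensity A B fM x l) :=
  ENNReal.ofReal_prod_of_nonneg fun l _ => layerDensity_nonneg hB fM x l

lemma measurable_layerDensity (hA : ∀ l i j, Measurable fun x => A l x i j)
    (hB : ∀ l i j, Measurable fun x => B l x i j) (l : Fin (K + 1)) :
    Measurable fun p : (((l : Fin (K + 1)) × κ l) → ℝ) × (((l : Fin (K + 2)) × I l) → ℝ) =>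
      layerDensity A B p.1 p.2 l := by
  have hinput : Measurable fun p : (((l : Fin (K + 1)) × κ l) → ℝ) ×
      (((l : Fin (K + 2)) × I l) → ℝ) => fun q => p.2 ⟨l.castSucc, q⟩ := by
    fun_prop
  refine measurable_gaussPDF (measurable_pi_iff.2 fun i => ?_)
    (fun i j => (hB l i j).comp hinput) (by fun_prop)
  exact Finset.measurable_sum _ fun c _ => ((hA l i c).comp hinput).mul (by fun_prop)

lemma integrable_mul_prod_layerDensity (hB : ∀ l x, (B l x).PosDef)
    {φ : (((l : Fin (K + 1)) × κ l) → ℝ) → ℝ} (hφ : Integrable φ)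
    (x : ((l : Fin (K + 2)) × I l) → ℝ) :
    Integrable fun fM => φ fM * ∏ l, layerDensity A B fM x l := by
  have hmeas : Measurable fun fM => ∏ l, layerDensity A B fM x l :=
    Finset.measurable_prod _ fun l _ => measurable_gaussPDF
      (measurable_pi_iff.2 fun i => Finset.measurable_sum _ fun c _ =>
        (measurable_pi_apply _).const_mul _)
      (fun _ _ => measurable_const) measurable_const
  obtain ⟨C, hC⟩ : ∃ C, ∀ fM, ∏ l, layerDensity A B fM x l ≤ C :=
    ⟨_, fun fM => Finset.prod_le_prod (fun l _ => layerDensity_nonneg hB fM x l)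
      fun l _ => gaussPDF_le _ (hB l _) _⟩
  refine hφ.mul_bdd (c := C) hmeas.aestronglyMeasurable (.of_forall fun fM => ?_)
  rw [Real.norm_of_nonneg (prod_layerDensity_nonneg hB fM x)]
  exact hC fM

end LayerDensity

/-- A coordinate of a family of `β`-vectors indexed by `α` belongs either to the block `n` or to
one of the other blocks. -/
def blockSplitEquiv {α : Type*} [DecidableEq α] (n : α) (β : Type*) :
    β ⊕ ({k : α // k ≠ n} × β) ≃ α × β :=
  Equiv.ofBijective (Sum.elim (fun i => (n, i)) fun p => (p.1, p.2)) <| by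
    constructor
    · rintro (i | ⟨⟨k, hk⟩, i⟩) (j | ⟨⟨k', hk'⟩, j⟩) h <;> grind
    · rintro ⟨k, i⟩
      obtain rfl | hk := eq_or_ne k n
      · exact ⟨Sum.inl i, rfl⟩
      · exact ⟨Sum.inr (⟨k, hk⟩, i), rfl⟩

variable {K N : ℕ} {T : Fin (K + 2) → ℕ}

/-- The free coordinates are the latent layers of datapoint `n` together with the non-input layers
of the other datapoints. -/
def freeIxEquiv (n : Fin N) :
    PtFreeIx K T ⊕ ((l : Fin (K + 1)) × ({k : Fin N // k ≠ n} × Fin (T l.succ))) ≃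
      FreeIx K N T n :=
  Equiv.ofBijective
    (Sum.elim (fun p => ⟨⟨p.1.1, n, p.1.2⟩, p.2.1, fun h => p.2.2 h.1⟩)
      fun p => ⟨⟨p.1.succ, p.2.1, p.2.2⟩, p.1.succ_ne_zero, fun h => p.2.1.2 h.2⟩) <| by
    constructor
    · rintro (⟨⟨l, i⟩, hl⟩ | ⟨l, ⟨k, hk⟩, i⟩) (⟨⟨l', i'⟩, hl'⟩ | ⟨l', ⟨k', hk'⟩, i'⟩) h <;> grind
    · rintro ⟨⟨l, k, i⟩, h0, hl⟩
      obtain rfl | hk := eq_or_ne k n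
      · exact ⟨Sum.inl ⟨⟨l, i⟩, h0, fun h => hl ⟨h, rfl⟩⟩, rfl⟩
      · obtain ⟨l, rfl⟩ := Fin.exists_succ_eq.2 h0
        exact ⟨Sum.inr ⟨l, ⟨k, hk⟩, i⟩, rfl⟩

lemma assembleN_apply_self (n : Fin N) (f0 : Fin N × Fin (T 0) → ℝ)
    (y : Fin (T (Fin.last (K + 1))) → ℝ) (z : FreeIx K N T n → ℝ) (l : Fin (K + 2))
    (i : Fin (T l)) :
    assembleN n f0 y z ⟨l, n, i⟩ =
      assemble1 (fun i0 => f0 (n, i0)) y (fun p => z (freeIxEquiv n (Sum.inl p))) ⟨l, i⟩ := by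
  simp only [assembleN, assemble1, and_true]
  rfl

lemma assembleN_succ_apply_of_ne (n : Fin N) (f0 : Fin N × Fin (T 0) → ℝ)
    (y : Fin (T (Fin.last (K + 1))) → ℝ) (z : FreeIx K N T n → ℝ) (l : Fin (K + 1))
    (k : {k : Fin N // k ≠ n}) (i : Fin (T l.succ)) :
    assembleN n f0 y z ⟨l.succ, k, i⟩ = z (freeIxEquiv n (Sum.inr ⟨l, k, i⟩)) := by
  simp only [assembleN, l.succ_ne_zero, k.2, and_false, dite_false]
  rfl

lemma measurable_assembleN (n : Fin N) (f0 : Fin N × Fin (T 0) → ℝ)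
    (y : Fin (T (Fin.last (K + 1))) → ℝ) : Measurable (assembleN n f0 y) := by
  refine measurable_pi_iff.2 fun p => ?_
  unfold assembleN
  split_ifs <;> fun_prop

/-- The non-input layers `f_{n'}^1, …, f_{n'}^L` of all datapoints `n' ≠ n`, grouped by layer so
that they can be integrated out one layer at a time. -/
abbrev OtherTraj (K : ℕ) {N : ℕ} (T : Fin (K + 2) → ℕ) (n : Fin N) : Type :=
  ∀ l : Fin (K + 1), {k : Fin N // k ≠ n} × Fin (T l.succ) → ℝ

/-- The `N`-point trajectory with latent layers `u` at datapoint `n` and non-input layers `v` at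
the other datapoints. -/
def mergeTraj (n : Fin N) (f0 : Fin N × Fin (T 0) → ℝ) (y : Fin (T (Fin.last (K + 1))) → ℝ)
    (u : PtFreeIx K T → ℝ)
    (v : OtherTraj K T n) : TrajIx K N T → ℝ :=
  assembleN n f0 y (Sum.elim u (fun q => v q.1 q.2) ∘ (freeIxEquiv n).symm)

section MergeTraj

variable (n : Fin N) (f0 : Fin N × Fin (T 0) → ℝ) (y : Fin (T (Fin.last (K + 1))) → ℝ)
  (u : PtFreeIx K T → ℝ)

lemma mergeTraj_apply_self (v : OtherTraj K T n)
    (l : Fin (K + 2)) (i : Fin (T l)) :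
    mergeTraj n f0 y u v ⟨l, n, i⟩ = assemble1 (fun i0 => f0 (n, i0)) y u ⟨l, i⟩ := by
  simp only [mergeTraj, assembleN_apply_self, Function.comp_apply, Equiv.symm_apply_apply,
    Sum.elim_inl]

lemma mergeTraj_succ_apply_of_ne
    (v : OtherTraj K T n) (l : Fin (K + 1))
    (k : {k : Fin N // k ≠ n}) (i : Fin (T l.succ)) :
    mergeTraj n f0 y u v ⟨l.succ, k, i⟩ = v l (k, i) := by
  simp only [mergeTraj, assembleN_succ_apply_of_ne, Function.comp_apply, Equiv.symm_apply_apply,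
    Sum.elim_inr]

lemma mergeTraj_succ (v : OtherTraj K T n)
    (l : Fin (K + 1)) :
    (fun q => mergeTraj n f0 y u v ⟨l.succ, q⟩) =
      Sum.elim (fun i => assemble1 (fun i0 => f0 (n, i0)) y u ⟨l.succ, i⟩) (v l) ∘
        (blockSplitEquiv n (Fin (T l.succ))).symm := by
  rw [Equiv.eq_comp_symm]
  ext (i | ⟨k, i⟩)
  · exact mergeTraj_apply_self n f0 y u v l.succ i
  · exact mergeTraj_succ_apply_of_ne n f0 y u v l k i

variable {n f0 y u} in
lemma mergeTraj_congr {v v' : OtherTraj K T n}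
    {l : Fin (K + 2)} (h : ∀ l' : Fin (K + 1), l'.succ = l → v l' = v' l')
    (q : Fin N × Fin (T l)) :
    mergeTraj n f0 y u v ⟨l, q⟩ = mergeTraj n f0 y u v' ⟨l, q⟩ := by
  cases l using Fin.cases with
  | zero => rfl
  | succ l =>
    have hblocks := mergeTraj_succ n f0 y u v l
    rw [h l rfl, ← mergeTraj_succ] at hblocks
    exact congr_fun hblocks q

lemma measurable_mergeTraj :
    Measurable fun p : (PtFreeIx K T → ℝ) ×
        OtherTraj K T n =>
      mergeTraj n f0 y p.1 p.2 := by
  refine (measurable_assembleN n f0 y).comp (measurable_pi_iff.2 fun r => ?_)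
  rcases h : (freeIxEquiv n).symm r with j | j
  · simp only [Function.comp_apply, h, Sum.elim_inl]
    exact (measurable_pi_apply j).comp measurable_fst
  · simp only [Function.comp_apply, h, Sum.elim_inr]
    fun_prop

end MergeTraj

section Marginalisation

variable {κ : Fin (K + 1) → Type*} [∀ l, Fintype (κ l)]
  {A : ∀ l : Fin (K + 1), (Fin N × Fin (T l.castSucc) → ℝ) →
    Matrix (Fin N × Fin (T l.succ)) (κ l) ℝ}
  {B : ∀ l : Fin (K + 1), (Fin N × Fin (T l.castSucc) → ℝ) →
    Matrix (Fin N × Fin (T l.succ)) (Fin N × Fin (T l.succ)) ℝ}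
  {a : ∀ l : Fin (K + 1), (Fin (T l.castSucc) → ℝ) → Matrix (Fin (T l.succ)) (κ l) ℝ}
  {b : ∀ l : Fin (K + 1), (Fin (T l.castSucc) → ℝ) →
    Matrix (Fin (T l.succ)) (Fin (T l.succ)) ℝ}
  {n : Fin N}

lemma posDef_of_diagonal_block (hBpd : ∀ l x, (B l x).PosDef)
    (hblock : ∀ l x i i', B l x (n, i) (n, i') = b l (fun i0 => x (n, i0)) i i')
    (l : Fin (K + 1)) (x : Fin (T l.castSucc) → ℝ) : (b l x).PosDef := by
  have hsub : (B l fun q => x q.2).submatrix (Prod.mk n) (Prod.mk n) = b l x :=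
    Matrix.ext fun i i' => hblock l _ i i'
  exact hsub ▸ (hBpd l _).submatrix (Prod.mk_right_injective n)

lemma lintegral_layerDensity_update (hBpd : ∀ l x, (B l x).PosDef)
    (hrow : ∀ l x i j, A l x (n, i) j = a l (fun i0 => x (n, i0)) i j)
    (hblock : ∀ l x i i', B l x (n, i) (n, i') = b l (fun i0 => x (n, i0)) i i')
    (f0 : Fin N × Fin (T 0) → ℝ) (y : Fin (T (Fin.last (K + 1))) → ℝ) (u : PtFreeIx K T → ℝ)
    (fM : ((l : Fin (K + 1)) × κ l) → ℝ) (l : Fin (K + 1))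
    (v : OtherTraj K T n) :
    ∫⁻ t, ENNReal.ofReal (layerDensity A B fM (mergeTraj n f0 y u (Function.update v l t)) l) =
      ENNReal.ofReal (layerDensity a b fM (assemble1 (fun i0 => f0 (n, i0)) y u) l) := by
  have hinput (t : {k : Fin N // k ≠ n} × Fin (T l.succ) → ℝ) :
      (fun q => mergeTraj n f0 y u (Function.update v l t) ⟨l.castSucc, q⟩) =
        fun q => mergeTraj n f0 y u v ⟨l.castSucc, q⟩ :=
    funext fun q => mergeTraj_congr (fun l' hl' => Function.update_of_ne
      (fun h => (Fin.castSucc_lt_succ (i := l)).ne (h ▸ hl').symm) _ _) q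
  have hself : (fun i0 => mergeTraj n f0 y u v ⟨l.castSucc, n, i0⟩) =
      fun i => assemble1 (fun i0 => f0 (n, i0)) y u ⟨l.castSucc, i⟩ :=
    funext fun i => mergeTraj_apply_self n f0 y u v l.castSucc i
  simp only [layerDensity, hinput, mergeTraj_succ, Function.update_self]
  rw [lintegral_gaussPDF_marginal _ _ (hBpd l _)]
  congr 2
  · ext i
    refine congrArg₂ (· ⬝ᵥ ·) (funext fun j => ?_) rfl
    exact (hrow l _ i j).trans (by rw [hself])
  · ext i i'
    exact (hblock l _ i i').trans (by rw [hself])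

lemma measurable_layerDensity_mergeTraj (hAmeas : ∀ l i j, Measurable fun x => A l x i j)
    (hBmeas : ∀ l i j, Measurable fun x => B l x i j) (f0 : Fin N × Fin (T 0) → ℝ)
    (y : Fin (T (Fin.last (K + 1))) → ℝ) (l : Fin (K + 1)) :
    Measurable fun p : (PtFreeIx K T → ℝ) × (((l : Fin (K + 1)) × κ l) → ℝ) × OtherTraj K T n =>
      layerDensity A B p.2.1 (mergeTraj n f0 y p.1 p.2.2) l := by
  have htraj : Measurable fun p : (PtFreeIx K T → ℝ) × (((l : Fin (K + 1)) × κ l) → ℝ) ×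
      OtherTraj K T n => mergeTraj n f0 y p.1 p.2.2 :=
    (measurable_mergeTraj n f0 y).comp (measurable_fst.prodMk measurable_snd.snd)
  have hcomp := (measurable_layerDensity (I := fun l => Fin N × Fin (T l)) hAmeas hBmeas l).comp
    (measurable_snd.fst.prodMk htraj)
  exact hcomp

lemma lintegral_prod_layerDensity_mergeTraj (hAmeas : ∀ l i j, Measurable fun x => A l x i j)
    (hBmeas : ∀ l i j, Measurable fun x => B l x i j) (hBpd : ∀ l x, (B l x).PosDef)
    (hrow : ∀ l x i j, A l x (n, i) j = a l (fun i0 => x (n, i0)) i j)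
    (hblock : ∀ l x i i', B l x (n, i) (n, i') = b l (fun i0 => x (n, i0)) i i')
    (f0 : Fin N × Fin (T 0) → ℝ) (y : Fin (T (Fin.last (K + 1))) → ℝ) (u : PtFreeIx K T → ℝ)
    (fM : ((l : Fin (K + 1)) × κ l) → ℝ) :
    ∫⁻ v, ENNReal.ofReal (∏ l, layerDensity A B fM (mergeTraj n f0 y u v) l) =
      ENNReal.ofReal
        (∏ l, layerDensity a b fM (assemble1 (fun i0 => f0 (n, i0)) y u) l) := by
  have hb := posDef_of_diagonal_block hBpd hblock
  simp only [ofReal_prod_layerDensity (I := fun l => Fin (T l)) hb,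
    ofReal_prod_layerDensity (I := fun l => Fin N × Fin (T l)) hBpd]
  refine lintegral_pi_prod_eq_of_dependsOn _ (fun l => ?_) (fun l v v' h => ?_)
    fun l v => lintegral_layerDensity_update hBpd hrow hblock f0 y u fM l v
  · exact ((measurable_layerDensity_mergeTraj hAmeas hBmeas f0 y l).comp
      (measurable_const.prodMk measurable_prodMk_left)).ennreal_ofReal
  · have hcongr {l' : Fin (K + 2)} (hl' : l' ≤ l.succ) (q : Fin N × Fin (T l')) :
        mergeTraj n f0 y u v ⟨l', q⟩ = mergeTraj n f0 y u v' ⟨l', q⟩ :=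
      mergeTraj_congr (fun k hk => h k (Fin.succ_le_succ_iff.1 (hk.le.trans hl'))) q
    simp only [layerDensity, hcongr (Fin.castSucc_le_succ l), hcongr le_rfl]

lemma lintegral_mul_prod_layerDensity_mergeTraj {φ : (((l : Fin (K + 1)) × κ l) → ℝ) → ℝ}
    (hφ0 : ∀ fM, 0 ≤ φ fM) (hAmeas : ∀ l i j, Measurable fun x => A l x i j)
    (hBmeas : ∀ l i j, Measurable fun x => B l x i j) (hBpd : ∀ l x, (B l x).PosDef)
    (hrow : ∀ l x i j, A l x (n, i) j = a l (fun i0 => x (n, i0)) i j)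
    (hblock : ∀ l x i i', B l x (n, i) (n, i') = b l (fun i0 => x (n, i0)) i i')
    (f0 : Fin N × Fin (T 0) → ℝ) (y : Fin (T (Fin.last (K + 1))) → ℝ) (u : PtFreeIx K T → ℝ)
    (fM : ((l : Fin (K + 1)) × κ l) → ℝ) :
    ∫⁻ v, ENNReal.ofReal (φ fM * ∏ l, layerDensity A B fM (mergeTraj n f0 y u v) l) =
      ENNReal.ofReal
        (φ fM * ∏ l, layerDensity a b fM (assemble1 (fun i0 => f0 (n, i0)) y u) l) := by
  simp only [ENNReal.ofReal_mul (hφ0 fM)]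
  rw [lintegral_const_mul' _ _ ENNReal.ofReal_ne_top,
    lintegral_prod_layerDensity_mergeTraj hAmeas hBmeas hBpd hrow hblock]

lemma aestronglyMeasurable_mul_prod_layerDensity_mergeTraj
    {φ : (((l : Fin (K + 1)) × κ l) → ℝ) → ℝ} (hφ : AEStronglyMeasurable φ)
    (hAmeas : ∀ l i j, Measurable fun x => A l x i j)
    (hBmeas : ∀ l i j, Measurable fun x => B l x i j)
    (f0 : Fin N × Fin (T 0) → ℝ) (y : Fin (T (Fin.last (K + 1))) → ℝ) :
    AEStronglyMeasurable fun p : (PtFreeIx K T → ℝ) × (((l : Fin (K + 1)) × κ l) → ℝ) ×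
        OtherTraj K T n =>
      φ p.2.1 * ∏ l, layerDensity A B p.2.1 (mergeTraj n f0 y p.1 p.2.2) l := by
  have hprod := Finset.measurable_prod Finset.univ fun l _ =>
    measurable_layerDensity_mergeTraj (n := n) hAmeas hBmeas f0 y l
  exact hφ.comp_fst.comp_snd.mul hprod.aestronglyMeasurable

lemma integrable_and_integral_mul_prod_layerDensity_mergeTraj
    {φ : (((l : Fin (K + 1)) × κ l) → ℝ) → ℝ} (hφ : Integrable φ) (hφ0 : ∀ fM, 0 ≤ φ fM)
    (hAmeas : ∀ l i j, Measurable fun x => A l x i j)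
    (hBmeas : ∀ l i j, Measurable fun x => B l x i j) (hBpd : ∀ l x, (B l x).PosDef)
    (hrow : ∀ l x i j, A l x (n, i) j = a l (fun i0 => x (n, i0)) i j)
    (hblock : ∀ l x i i', B l x (n, i) (n, i') = b l (fun i0 => x (n, i0)) i i')
    (f0 : Fin N × Fin (T 0) → ℝ) (y : Fin (T (Fin.last (K + 1))) → ℝ)
    (u : PtFreeIx K T → ℝ) :
    Integrable (fun p : (((l : Fin (K + 1)) × κ l) → ℝ) ×
        OtherTraj K T n =>
      φ p.1 * ∏ l, layerDensity A B p.1 (mergeTraj n f0 y u p.2) l) ∧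
    ∫ p : (((l : Fin (K + 1)) × κ l) → ℝ) ×
        OtherTraj K T n,
      φ p.1 * ∏ l, layerDensity A B p.1 (mergeTraj n f0 y u p.2) l =
    ∫ fM, φ fM * ∏ l, layerDensity a b fM (assemble1 (fun i0 => f0 (n, i0)) y u) l := by
  have hb := posDef_of_diagonal_block hBpd hblock
  have hprod := (Finset.measurable_prod Finset.univ fun l _ =>
    measurable_layerDensity_mergeTraj (n := n) hAmeas hBmeas f0 y l).comp
      (measurable_prodMk_left (x := u))
  exact integrable_prod_and_integral_eq
    (hφ.aestronglyMeasurable.comp_fst.mul hprod.aestronglyMeasurable)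
    (fun _ => mul_nonneg (hφ0 _) (prod_layerDensity_nonneg hBpd _ _))
    (integrable_mul_prod_layerDensity hb hφ _)
    (fun fM => mul_nonneg (hφ0 fM) (prod_layerDensity_nonneg hb fM _))
    (lintegral_mul_prod_layerDensity_mergeTraj hφ0 hAmeas hBmeas hBpd hrow hblock f0 y u)

theorem marginalisation_of_other_datapoints_general
    {φ : (((l : Fin (K + 1)) × κ l) → ℝ) → ℝ} (hφ : Integrable φ) (hφ0 : ∀ fM, 0 ≤ φ fM)
    (hAmeas : ∀ l i j, Measurable fun x => A l x i j)
    (hBmeas : ∀ l i j, Measurable fun x => B l x i j) (hBpd : ∀ l x, (B l x).PosDef)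
    (hrow : ∀ l x i j, A l x (n, i) j = a l (fun i0 => x (n, i0)) i j)
    (hblock : ∀ l x i i', B l x (n, i) (n, i') = b l (fun i0 => x (n, i0)) i i')
    (f0 : Fin N × Fin (T 0) → ℝ) (y : Fin (T (Fin.last (K + 1))) → ℝ) :
    ∫ w : FreeIx K N T n ⊕ ((l : Fin (K + 1)) × κ l) → ℝ,
        φ (w ∘ Sum.inr) *
          ∏ l, layerDensity A B (w ∘ Sum.inr) (assembleN n f0 y (w ∘ Sum.inl)) l =
      ∫ u : PtFreeIx K T → ℝ, ∫ fM,
        φ fM * ∏ l, layerDensity a b fM (assemble1 (fun i0 => f0 (n, i0)) y u) l := by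
  have hfibre := integrable_and_integral_mul_prod_layerDensity_mergeTraj hφ hφ0 hAmeas hBmeas
    hBpd hrow hblock f0 y
  calc
    _ = ∫ p : (PtFreeIx K T → ℝ) × (((l : Fin (K + 1)) × κ l) → ℝ) ×
          OtherTraj K T n,
        φ p.2.1 * ∏ l, layerDensity A B p.2.1 (mergeTraj n f0 y p.1 p.2.2) l :=
      integral_sum_eq_integral_blocks (freeIxEquiv n) fun z fM =>
        φ fM * ∏ l, layerDensity A B fM (assembleN n f0 y z) l
    _ = ∫ u : PtFreeIx K T → ℝ, ∫ q : (((l : Fin (K + 1)) × κ l) → ℝ) ×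
          OtherTraj K T n,
        φ q.1 * ∏ l, layerDensity A B q.1 (mergeTraj n f0 y u q.2) l :=
      integral_prod_of_nonneg
        (aestronglyMeasurable_mul_prod_layerDensity_mergeTraj hφ.aestronglyMeasurable hAmeas
          hBmeas f0 y)
        (fun _ => mul_nonneg (hφ0 _) (prod_layerDensity_nonneg hBpd _ _))
        (.of_forall fun u => (hfibre u).1)
    _ = _ := integral_congr_ae (.of_forall fun u => (hfibre u).2)

end Marginalisation

end LayeredModel

/-- **Marginalisation of the latent-layer outputs of the other datapoints.**  If for
every layer the `n`-th row block of `A^l(f_N^{l−1})` is `a^l(f_n^{l−1})` and the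
`(n, n)` diagonal block of `B^l(f_N^{l−1})` is `b^l(f_n^{l−1})`, then the marginal
density of `f_n^L` depends only on the datapoint-`n` rows of the conditionals: all other
datapoints' latent outputs integrate out. -/
theorem marginalisation_of_other_datapoints (K N : ℕ) (hN : 1 ≤ N)
    (T : Fin (K + 2) → ℕ) (m : Fin (K + 1) → ℕ)
    (μM : ((l : Fin (K + 1)) × Fin (m l)) → ℝ)
    (SM : Matrix ((l : Fin (K + 1)) × Fin (m l)) ((l : Fin (K + 1)) × Fin (m l)) ℝ)
    (hSM : SM.PosDef)
    (A : ∀ l : Fin (K + 1), ((Fin N × Fin (T l.castSucc)) → ℝ) →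
      Matrix (Fin N × Fin (T l.succ)) (Fin (m l)) ℝ)
    (B : ∀ l : Fin (K + 1), ((Fin N × Fin (T l.castSucc)) → ℝ) →
      Matrix (Fin N × Fin (T l.succ)) (Fin N × Fin (T l.succ)) ℝ)
    (hAmeas : ∀ l i j, Measurable fun x => A l x i j)
    (hBmeas : ∀ l i j, Measurable fun x => B l x i j)
    (hBpd : ∀ l x, (B l x).PosDef)
    (a : ∀ l : Fin (K + 1), (Fin (T l.castSucc) → ℝ) →
      Matrix (Fin (T l.succ)) (Fin (m l)) ℝ)
    (b : ∀ l : Fin (K + 1), (Fin (T l.castSucc) → ℝ) →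
      Matrix (Fin (T l.succ)) (Fin (T l.succ)) ℝ)
    (haMeas : ∀ l i j, Measurable fun x => a l x i j)
    (hbMeas : ∀ l i j, Measurable fun x => b l x i j)
    (hbpd : ∀ l x, (b l x).PosDef)
    (n : Fin N)
    (hrow : ∀ l x i j, A l x (n, i) j = a l (fun i0 => x (n, i0)) i j)
    (hblock : ∀ l x i i', B l x (n, i) (n, i') = b l (fun i0 => x (n, i0)) i i')
    (f0 : Fin N × Fin (T 0) → ℝ) :
    ∀ y : Fin (T (Fin.last (K + 1))) → ℝ,
      (∫ w : (FreeIx K N T n ⊕ ((l : Fin (K + 1)) × Fin (m l))) → ℝ,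
          gaussPDF μM SM (fun k => w (Sum.inr k)) *
            ∏ l : Fin (K + 1),
              gaussPDF
                (A l (fun q => assembleN n f0 y (fun r => w (Sum.inl r)) ⟨l.castSucc, q⟩)
                    *ᵥ fun c => w (Sum.inr ⟨l, c⟩))
                (B l fun q => assembleN n f0 y (fun r => w (Sum.inl r)) ⟨l.castSucc, q⟩)
                (fun q => assembleN n f0 y (fun r => w (Sum.inl r)) ⟨l.succ, q⟩)) =
        ∫ u : PtFreeIx K T → ℝ,
          ∫ fM : ((l : Fin (K + 1)) × Fin (m l)) → ℝ,
            gaussPDF μM SM fM *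
              ∏ l : Fin (K + 1),
                gaussPDF
                  (a l (fun i => assemble1 (fun i0 => f0 (n, i0)) y u ⟨l.castSucc, i⟩)
                      *ᵥ fun c => fM ⟨l, c⟩)
                  (b l fun i => assemble1 (fun i0 => f0 (n, i0)) y u ⟨l.castSucc, i⟩)
                  (fun i => assemble1 (fun i0 => f0 (n, i0)) y u ⟨l.succ, i⟩) :=
  marginalisation_of_other_datapoints_general (integrable_gaussPDF μM hSM) (gaussPDF_nonneg μM hSM)
    hAmeas hBmeas hBpd hrow hblock f0

end
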